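/- For every basic set B ⊆ A × A × A, the sequence ln(ln c_n)/n converges as n → ∞, and its limit is either 0 or ln 2. In other words, the entropy of every binary Markov tree-shift over two symbols is either 0 or ln 2. -/

import Mathlib

open Filter Real

/-- The set of `n`-blocks of the binary Markov tree-shift over the alphabet `Fin 2`
(symbols `0,1` standing for `1,2`) with basic set `B` of 2-blocks `(i,j,k)`:
labelings of the binary words of length `< n` such that every node `v` of length
`≤ n-2`, together with its children `v0` and `v1`, forms a pattern in `B`. -/
def Block2 (B : Finset (Fin 2 × Fin 2 × Fin 2)) (n : ℕ) :
    Set ({w : List (Fin 2) // w.length < n} → Fin 2) :=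
  {u | ∀ (v : List (Fin 2)) (h : v.length + 2 ≤ n),
    (u ⟨v, by omega⟩,
     u ⟨v ++ [0], by simp; omega⟩,
     u ⟨v ++ [1], by simp; omega⟩) ∈ B}

/-- The `n`-blocks whose root is labeled `i`. -/
def BlockRoot2 (B : Finset (Fin 2 × Fin 2 × Fin 2)) (i : Fin 2) (n : ℕ) :
    Set ({w : List (Fin 2) // w.length < n} → Fin 2) :=
  {u | u ∈ Block2 B n ∧ ∀ h : 0 < n, u ⟨[], by simpa using h⟩ = i}

/-!
Splitting a block at its root shows that the number `r_i(n)` of blocks of height `n` rooted at `i`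
obeys `r_i(n + 1) = ∑ r_j(n) r_k(n)`, the sum running over the child pairs `(j, k)` allowed below
`i`. The limit is `ln 2` as soon as some count `r_i(N)` is at least `2` and keeps squaring from
there on. If no symbol has two child pairs, every `r_i` is at most `1`. Otherwise let `i` have at
least two child pairs and let `j` be the other symbol. If `(i, i)` is allowed below `i`, then `r_i`
keeps squaring by itself. If some pair other than `(j, j)` is allowed below `j`, both counts reach
`2` at height `2` and keep squaring together. In the remaining case `r_j ≤ 1` and
`r_i(n + 1) ≤ 1 + 2 r_i(n)`, so the growth is only exponential and the limit is `0`.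
-/

open Asymptotics Finset

section Asymptotics

theorem tendsto_log_div_of_isTheta_pow {x : ℕ → ℝ} {b : ℝ} (hb : b ≠ 0)
    (hx : x =Θ[atTop] fun n ↦ b ^ n) :
    Tendsto (fun n : ℕ ↦ log (x n) / n) atTop (nhds (log b)) := by
  obtain ⟨C, hC, hxC⟩ := hx.1.exists_pos
  obtain ⟨D, hD, hxD⟩ := hx.2.exists_pos
  have shifted_limit (K : ℝ) :
      Tendsto (fun n : ℕ ↦ log b + K / n) atTop (nhds (log b)) := by
    simpa using tendsto_const_nhds.add (tendsto_const_div_atTop_nhds_zero_nat K)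
  have log_bounds : ∀ᶠ n : ℕ in atTop,
      n * log b - log D ≤ log (x n) ∧ log (x n) ≤ n * log b + log C := by
    filter_upwards [hxC.bound, hxD.bound] with n hC' hD'
    have hbn : 0 < ‖b ^ n‖ := norm_pos_iff.mpr (pow_ne_zero n hb)
    have hxn : 0 < ‖x n‖ := pos_of_mul_pos_right (hbn.trans_le hD') hD.le
    have upper := log_le_log hxn hC'
    have lower := log_le_log hbn hD'
    rw [log_mul (by positivity) hbn.ne'] at upper
    rw [log_mul (by positivity) hxn.ne'] at lower
    simp only [norm_eq_abs, log_abs, log_pow] at upper lower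
    constructor <;> linarith
  refine tendsto_of_tendsto_of_tendsto_of_le_of_le'
    (shifted_limit (-log D)) (shifted_limit (log C)) ?_ ?_
  · filter_upwards [log_bounds, eventually_gt_atTop 0] with n hn hn₀
    have : (0 : ℝ) < n := by exact_mod_cast hn₀
    rw [le_div_iff₀ this, add_mul, div_mul_cancel₀ _ this.ne']
    linarith [hn.1]
  · filter_upwards [log_bounds, eventually_gt_atTop 0] with n hn hn₀
    have : (0 : ℝ) < n := by exact_mod_cast hn₀
    rw [div_le_iff₀ this, add_mul, div_mul_cancel₀ _ this.ne']
    linarith [hn.2]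

theorem log_natCast_le_mul_log {m b k : ℕ} (h : m ≤ b ^ k) : log m ≤ k * log b := by
  rcases m.eq_zero_or_pos with rfl | hm
  · simpa using mul_nonneg k.cast_nonneg (log_natCast_nonneg b)
  · rw [← log_pow]
    exact log_le_log (by exact_mod_cast hm) (by exact_mod_cast h)

theorem mul_log_le_log_natCast {m b k : ℕ} (hb : 0 < b) (h : b ^ k ≤ m) : k * log b ≤ log m := by
  rw [← log_pow]
  exact log_le_log (by positivity) (by exact_mod_cast h)

/- The junk values `log 0 = 0` and `log (log 1) = 0` respect the bound because `log 2 < 1`. -/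
theorem log_log_two_le_log_log_natCast (m : ℕ) : log (log 2) ≤ log (log m) := by
  have log_two_pos : 0 < log 2 := log_pos one_lt_two
  have log_log_two_neg : log (log 2) < 0 :=
    log_neg log_two_pos (log_two_lt_d9.trans (by norm_num))
  rcases Nat.lt_or_ge m 2 with hm | hm
  · interval_cases m <;> simpa using log_log_two_neg.le
  · exact log_le_log log_two_pos (log_le_log two_pos (by exact_mod_cast hm))

theorem tendsto_log_log_div_of_pow_pow_le {c : ℕ → ℕ} {N : ℕ}
    (lower : ∀ n, 2 ^ 2 ^ n ≤ c (n + N)) (upper : ∀ᶠ n in atTop, c n ≤ 2 ^ 2 ^ n) :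
    Tendsto (fun n : ℕ ↦ log (log (c n)) / n) atTop (nhds (log 2)) := by
  refine tendsto_log_div_of_isTheta_pow two_ne_zero ⟨.of_bound (log 2) ?_, ?_⟩
  · filter_upwards [upper] with n hn
    rw [norm_of_nonneg (log_natCast_nonneg _), norm_of_nonneg (by positivity), mul_comm]
    exact_mod_cast log_natCast_le_mul_log hn
  · refine .of_bound (2 ^ N / log 2) ?_
    filter_upwards [eventually_ge_atTop N] with n hn
    obtain ⟨k, rfl⟩ := Nat.exists_eq_add_of_le' hn
    have hk : 2 ^ k * log 2 ≤ log (c (k + N)) := by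
      exact_mod_cast mul_log_le_log_natCast two_pos (lower k)
    rw [norm_of_nonneg (log_natCast_nonneg _), norm_of_nonneg (by positivity), div_mul_eq_mul_div,
      le_div_iff₀ (log_pos one_lt_two), pow_add, mul_right_comm, mul_comm (2 ^ N : ℝ)]
    gcongr

theorem tendsto_log_log_div_of_le_pow {c : ℕ → ℕ} {b : ℕ} (upper : ∀ᶠ n in atTop, c n ≤ b ^ n) :
    Tendsto (fun n : ℕ ↦ log (log (c n)) / n) atTop (nhds 0) := by
  have log_div_limit : Tendsto (fun n : ℕ ↦ log n / n) atTop (nhds 0) :=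
    isLittleO_log_id_atTop.tendsto_div_nhds_zero.comp tendsto_natCast_atTop_atTop
  have upper_limit : Tendsto (fun n : ℕ ↦ (log n + log⁺ (log b)) / n) atTop (nhds 0) := by
    simpa only [add_div, add_zero] using
      log_div_limit.add (tendsto_const_div_atTop_nhds_zero_nat (log⁺ (log b)))
  refine tendsto_of_tendsto_of_tendsto_of_le_of_le'
    (tendsto_const_div_atTop_nhds_zero_nat (log (log 2))) upper_limit ?_ ?_
  · filter_upwards with n
    exact div_le_div_of_nonneg_right (log_log_two_le_log_log_natCast (c n)) n.cast_nonneg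
  · filter_upwards [upper] with n hn
    gcongr
    calc log (log (c n)) ≤ log⁺ (log (c n)) := le_max_right _ _
      _ ≤ log⁺ (n * log b) :=
        posLog_le_posLog (log_natCast_nonneg _) (log_natCast_le_mul_log hn)
      _ ≤ log n + log⁺ (log b) := posLog_nat_mul

end Asymptotics

section TreeCount

variable {α : Type*} {R : α → Finset (α × α)} {i j : α}

/-- The number of labelings of the complete binary tree of height `n` whose root is labeled `i` and
in which the children of every node labeled `k` carry a pair of labels in `R k`. Since `n` counts
levels of edges, an `n`-block of the tree-shift has height `n - 1`. -/
def treeCount (R : α → Finset (α × α)) : ℕ → α → ℕ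
  | 0, _ => 1
  | n + 1, i => ∑ q ∈ R i, treeCount R n q.1 * treeCount R n q.2

theorem treeCount_one : treeCount R 1 i = #(R i) := by simp [treeCount]

theorem mul_le_treeCount_succ {q : α × α} (hq : q ∈ R i) (n : ℕ) :
    treeCount R n q.1 * treeCount R n q.2 ≤ treeCount R (n + 1) i :=
  single_le_sum (f := fun q ↦ treeCount R n q.1 * treeCount R n q.2) (fun _ _ ↦ Nat.zero_le _) hq

theorem treeCount_pos (hR : ∀ i, (R i).Nonempty) (n : ℕ) (i : α) : 0 < treeCount R n i := by
  induction n generalizing i with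
  | zero => exact one_pos
  | succ n ih => exact sum_pos (fun q _ ↦ mul_pos (ih q.1) (ih q.2)) (hR i)

theorem card_le_treeCount_succ (hR : ∀ i, (R i).Nonempty) (n : ℕ) (i : α) :
    #(R i) ≤ treeCount R (n + 1) i := by
  rw [card_eq_sum_ones]
  exact sum_le_sum fun q _ ↦ mul_pos (treeCount_pos hR n q.1) (treeCount_pos hR n q.2)

theorem two_pow_two_pow_le_treeCount {S : Set α} {N : ℕ}
    (closed : ∀ i ∈ S, ∃ q ∈ R i, q.1 ∈ S ∧ q.2 ∈ S) (hN : ∀ i ∈ S, 2 ≤ treeCount R N i)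
    (n : ℕ) (hi : i ∈ S) : 2 ^ 2 ^ n ≤ treeCount R (n + N) i := by
  induction n generalizing i with
  | zero => simpa using hN i hi
  | succ n ih =>
    obtain ⟨q, hq, hq₁, hq₂⟩ := closed i hi
    calc 2 ^ 2 ^ (n + 1) = 2 ^ 2 ^ n * 2 ^ 2 ^ n := by rw [← pow_add, pow_succ, mul_two]
      _ ≤ treeCount R (n + N) q.1 * treeCount R (n + N) q.2 := Nat.mul_le_mul (ih hq₁) (ih hq₂)
      _ ≤ treeCount R (n + N + 1) i := mul_le_treeCount_succ hq _
      _ = treeCount R (n + 1 + N) i := by rw [add_right_comm]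

theorem treeCount_le_one {S : Set α} (card_le : ∀ i ∈ S, #(R i) ≤ 1)
    (closed : ∀ i ∈ S, ∀ q ∈ R i, q.1 ∈ S ∧ q.2 ∈ S) (n : ℕ) (hi : i ∈ S) :
    treeCount R n i ≤ 1 := by
  induction n generalizing i with
  | zero => exact le_rfl
  | succ n ih =>
    calc treeCount R (n + 1) i ≤ ∑ q ∈ R i, 1 :=
          sum_le_sum fun q hq ↦ mul_le_one' (ih (closed i hi q hq).1) (ih (closed i hi q hq).2)
      _ = #(R i) := (card_eq_sum_ones _).symm
      _ ≤ 1 := card_le i hi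

theorem treeCount_le_one_of_subset_singleton (hj : R j ⊆ {(j, j)}) (n : ℕ) :
    treeCount R n j ≤ 1 := by
  refine treeCount_le_one (S := {j}) ?_ ?_ n rfl
  · rintro _ rfl
    exact card_le_card hj
  · rintro _ rfl q hq
    simp [mem_singleton.mp (hj hq)]

theorem treeCount_add_one_le_two_pow [DecidableEq α] (hi : R i ⊆ {(j, j), (i, j), (j, i)})
    (hj : R j ⊆ {(j, j)}) (n : ℕ) : treeCount R n i + 1 ≤ 2 ^ (n + 1) := by
  induction n with
  | zero => simp [treeCount]
  | succ n ih =>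
    let f : α × α → ℕ := fun q ↦ treeCount R n q.1 * treeCount R n q.2
    have sum_insert_le (s : Finset (α × α)) (q : α × α) :
        ∑ p ∈ insert q s, f p ≤ f q + ∑ p ∈ s, f p := by
      by_cases hq : q ∈ s
      · simp [insert_eq_of_mem hq]
      · exact (sum_insert hq).le
    have count_j_le := treeCount_le_one_of_subset_singleton hj n
    have step : treeCount R (n + 1) i ≤ 1 + 2 * treeCount R n i :=
      calc treeCount R (n + 1) i ≤ ∑ q ∈ {(j, j), (i, j), (j, i)}, f q := sum_le_sum_of_subset hi
        _ ≤ f (j, j) + (f (i, j) + f (j, i)) := by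
          grw [sum_insert_le, sum_insert_le, sum_singleton]
        _ ≤ 1 * 1 + (treeCount R n i * 1 + 1 * treeCount R n i) := by
          dsimp only [f]; gcongr
        _ = 1 + 2 * treeCount R n i := by ring
    rw [pow_succ]
    lia

theorem treeCount_succ_le_sq [Fintype α] (n : ℕ) (i : α) :
    treeCount R (n + 1) i ≤ (∑ k, treeCount R n k) ^ 2 :=
  calc treeCount R (n + 1) i ≤ ∑ q : α × α, treeCount R n q.1 * treeCount R n q.2 :=
        sum_le_sum_of_subset (subset_univ _)
    _ = (∑ k, treeCount R n k) ^ 2 := by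
        rw [sq, sum_mul_sum, Fintype.sum_prod_type]

theorem card_mul_sum_treeCount_le [Fintype α] (n : ℕ) :
    Fintype.card α * ∑ i, treeCount R n i ≤ (Fintype.card α ^ 2) ^ 2 ^ n := by
  induction n with
  | zero => simp [treeCount, sq]
  | succ n ih =>
    calc Fintype.card α * ∑ i, treeCount R (n + 1) i
        ≤ Fintype.card α * ∑ _i : α, (∑ k, treeCount R n k) ^ 2 := by
          gcongr with i
          exact treeCount_succ_le_sq n i
      _ = (Fintype.card α * ∑ k, treeCount R n k) ^ 2 := by
          rw [sum_const, card_univ, smul_eq_mul]; ring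
      _ ≤ ((Fintype.card α ^ 2) ^ 2 ^ n) ^ 2 := by gcongr
      _ = (Fintype.card α ^ 2) ^ 2 ^ (n + 1) := by rw [← pow_mul, ← pow_succ]

end TreeCount

section TwoSymbols

variable {α : Type*} {R : α → Finset (α × α)} {i j : α}

theorem two_pow_two_pow_le_treeCount_of_self_mem (card_i : 2 ≤ #(R i)) (hi : (i, i) ∈ R i)
    (n : ℕ) : 2 ^ 2 ^ n ≤ treeCount R (n + 1) i := by
  refine two_pow_two_pow_le_treeCount (S := {i}) ?_ ?_ n rfl
  · rintro _ rfl
    exact ⟨_, hi, rfl, rfl⟩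
  · rintro _ rfl
    rwa [treeCount_one]

theorem two_pow_two_pow_le_treeCount_of_not_subset (symbols : ∀ k, k = i ∨ k = j)
    (card_i : 2 ≤ #(R i)) (hj : ¬R j ⊆ {(j, j)}) (n : ℕ) :
    2 ^ 2 ^ n ≤ treeCount R (n + 2) i := by
  obtain ⟨q, hq, q_ne⟩ := not_subset.mp hj
  have nonempty (k : α) : (R k).Nonempty := by
    rcases symbols k with rfl | rfl
    · exact card_pos.mp (two_pos.trans_le card_i)
    · exact ⟨q, hq⟩
  have count_i : 2 ≤ treeCount R 1 i := by rwa [treeCount_one]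
  have count_j : 2 ≤ treeCount R 2 j := by
    refine le_trans ?_ (mul_le_treeCount_succ hq 1)
    have pos₁ := treeCount_pos nonempty 1 q.1
    have pos₂ := treeCount_pos nonempty 1 q.2
    have mem_i : q.1 = i ∨ q.2 = i := by
      by_contra! h
      exact q_ne (mem_singleton.mpr
        (Prod.ext ((symbols _).resolve_left h.1) ((symbols _).resolve_left h.2)))
    rcases mem_i with h | h
    · exact Nat.mul_le_mul (h ▸ count_i) pos₂
    · exact Nat.mul_le_mul pos₁ (h ▸ count_i)
  refine two_pow_two_pow_le_treeCount (S := Set.univ) (fun k _ ↦ ?_) (fun k _ ↦ ?_) n trivial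
  · obtain ⟨p, hp⟩ := nonempty k
    exact ⟨p, hp, trivial, trivial⟩
  · rcases symbols k with rfl | rfl
    · exact card_i.trans (card_le_treeCount_succ nonempty 1 k)
    · exact count_j

theorem treeCount_le_two_pow_of_subset (symbols : ∀ k, k = i ∨ k = j) (hi : (i, i) ∉ R i)
    (hj : R j ⊆ {(j, j)}) (n : ℕ) (k : α) : treeCount R n k ≤ 2 ^ (n + 1) := by
  classical
  rcases symbols k with rfl | rfl
  · refine Nat.le_of_succ_le (treeCount_add_one_le_two_pow (j := j) ?_ hj n)
    rintro ⟨a, b⟩ hq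
    rcases symbols a with rfl | rfl <;> rcases symbols b with rfl | rfl <;> simp_all
  · exact (treeCount_le_one_of_subset_singleton hj n).trans Nat.one_le_two_pow

theorem treeCount_dichotomy (R : Fin 2 → Finset (Fin 2 × Fin 2)) :
    (∃ N i, ∀ n, 2 ^ 2 ^ n ≤ treeCount R (n + N) i) ∨ ∀ n i, treeCount R n i ≤ 2 ^ (n + 1) := by
  by_cases! card_le : ∀ i, #(R i) ≤ 1
  · exact .inr fun n i ↦ (treeCount_le_one (S := Set.univ) (fun k _ ↦ card_le k)
      (fun _ _ _ _ ↦ ⟨trivial, trivial⟩) n trivial).trans Nat.one_le_two_pow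
  obtain ⟨i, card_i⟩ := card_le
  have symbols : ∀ k, k = i ∨ k = i.rev :=
    (by decide : ∀ i k : Fin 2, k = i ∨ k = i.rev) i
  by_cases hi : (i, i) ∈ R i
  · exact .inl ⟨1, i, two_pow_two_pow_le_treeCount_of_self_mem card_i hi⟩
  by_cases hj : R i.rev ⊆ {(i.rev, i.rev)}
  · exact .inr (treeCount_le_two_pow_of_subset symbols hi hj)
  · exact .inl ⟨2, i, two_pow_two_pow_le_treeCount_of_not_subset symbols card_i hj⟩

end TwoSymbols

section Blocks

variable {B : Finset (Fin 2 × Fin 2 × Fin 2)} {n : ℕ} {i : Fin 2}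

/-- Labelings of the binary words of length less than `n`, the ambient type of the `n`-blocks. -/
abbrev Labeling (n : ℕ) : Type := {w : List (Fin 2) // w.length < n} → Fin 2

instance finite_words_length_lt (n : ℕ) : Finite {w : List (Fin 2) // w.length < n} :=
  (List.finite_length_lt (Fin 2) n).to_subtype

/-- The labeling of a tree with root label `i` and with the subtrees `l` and `r` at its children `0`
and `1`. -/
def Labeling.glue (i : Fin 2) (l r : Labeling n) : Labeling (n + 1)
  | ⟨[], _⟩ => i
  | ⟨0 :: w, h⟩ => l ⟨w, Nat.lt_of_succ_lt_succ h⟩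
  | ⟨1 :: w, h⟩ => r ⟨w, Nat.lt_of_succ_lt_succ h⟩

/-- The labeling of the subtree at the child `x` of the root. -/
def Labeling.subtree (x : Fin 2) (u : Labeling (n + 1)) : Labeling n :=
  fun w ↦ u ⟨x :: w.1, Nat.succ_lt_succ w.2⟩

theorem Labeling.subtree_mem_block2 (x : Fin 2) {u : Labeling (n + 1)} (hu : u ∈ Block2 B (n + 1)) :
    u.subtree x ∈ Block2 B n :=
  fun v hv ↦ hu (x :: v) (by simp only [List.length_cons]; lia)

theorem Labeling.glue_mem_block2 {l r : Labeling (n + 1)} (hl : l ∈ Block2 B (n + 1))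
    (hr : r ∈ Block2 B (n + 1)) (root_mem : (i, l ⟨[], n.succ_pos⟩, r ⟨[], n.succ_pos⟩) ∈ B) :
    glue i l r ∈ Block2 B (n + 2)
  | [], _ => root_mem
  | 0 :: v, hv => hl v (Nat.le_of_succ_le_succ hv)
  | 1 :: v, hv => hr v (Nat.le_of_succ_le_succ hv)

theorem Labeling.glue_subtree (u : Labeling (n + 1)) :
    glue (u ⟨[], n.succ_pos⟩) (u.subtree 0) (u.subtree 1) = u := by
  funext w
  match w with
  | ⟨[], _⟩ | ⟨0 :: _, _⟩ | ⟨1 :: _, _⟩ => rfl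

/-- The pairs of labels that the basic set `B` allows at the children of a node labeled `i`. -/
def childPairs (B : Finset (Fin 2 × Fin 2 × Fin 2)) (i : Fin 2) : Finset (Fin 2 × Fin 2) :=
  {q | (i, q) ∈ B}

theorem mem_childPairs {q : Fin 2 × Fin 2} : q ∈ childPairs B i ↔ (i, q) ∈ B := by
  simp [childPairs]

/-- Splitting a block at its root into the two blocks rooted at the children. -/
def blockRoot2Equiv (B : Finset (Fin 2 × Fin 2 × Fin 2)) (i : Fin 2) (n : ℕ) :
    BlockRoot2 B i (n + 2) ≃
      Σ q : childPairs B i, BlockRoot2 B q.1.1 (n + 1) × BlockRoot2 B q.1.2 (n + 1) where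
  toFun u :=
    ⟨⟨(u.1 ⟨[0], by simp⟩, u.1 ⟨[1], by simp⟩),
        mem_childPairs.mpr (u.2.2 (n + 1).succ_pos ▸ u.2.1 [] (by simp))⟩,
      ⟨Labeling.subtree 0 u.1, Labeling.subtree_mem_block2 0 u.2.1, fun _ ↦ rfl⟩,
      ⟨Labeling.subtree 1 u.1, Labeling.subtree_mem_block2 1 u.2.1, fun _ ↦ rfl⟩⟩
  invFun s :=
    ⟨Labeling.glue i s.2.1.1 s.2.2.1,
      Labeling.glue_mem_block2 s.2.1.2.1 s.2.2.2.1 (by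
        rw [s.2.1.2.2 n.succ_pos, s.2.2.2.2 n.succ_pos]
        exact mem_childPairs.mp s.1.2),
      fun _ ↦ rfl⟩
  left_inv := by
    rintro ⟨u, hu, hi⟩
    obtain rfl := hi (n + 1).succ_pos
    exact Subtype.ext (Labeling.glue_subtree u)
  right_inv := by
    rintro ⟨⟨⟨j, k⟩, hq⟩, ⟨l, hl, hj⟩, ⟨r, hr, hk⟩⟩
    obtain rfl : l ⟨[], n.succ_pos⟩ = j := hj n.succ_pos
    obtain rfl : r ⟨[], n.succ_pos⟩ = k := hk n.succ_pos
    rfl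

theorem card_blockRoot2_one (B : Finset (Fin 2 × Fin 2 × Fin 2)) (i : Fin 2) :
    Nat.card (BlockRoot2 B i 1) = 1 := by
  rw [Nat.card_eq_one_iff_unique]
  refine ⟨⟨?_⟩, ⟨⟨fun _ ↦ i, fun v hv ↦ absurd hv (by lia), fun _ ↦ rfl⟩⟩⟩
  rintro ⟨u, _, hu⟩ ⟨v, _, hv⟩
  refine Subtype.ext (funext fun ⟨w, hw⟩ ↦ ?_)
  obtain rfl : w = [] := List.length_eq_zero_iff.mp (Nat.lt_one_iff.mp hw)
  exact (hu one_pos).trans (hv one_pos).symm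

theorem card_blockRoot2_succ (B : Finset (Fin 2 × Fin 2 × Fin 2)) (i : Fin 2) (n : ℕ) :
    Nat.card (BlockRoot2 B i (n + 1)) = treeCount (childPairs B) n i := by
  induction n generalizing i with
  | zero => exact card_blockRoot2_one B i
  | succ n ih =>
    rw [Nat.card_congr (blockRoot2Equiv B i n), Nat.card_sigma]
    simp only [Nat.card_prod, ih]
    exact sum_coe_sort _ fun q : Fin 2 × Fin 2 ↦
      treeCount (childPairs B) n q.1 * treeCount (childPairs B) n q.2

/-- Classifying the blocks by their root label. -/
def block2EquivSigma (B : Finset (Fin 2 × Fin 2 × Fin 2)) (n : ℕ) :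
    Block2 B (n + 1) ≃ Σ i, BlockRoot2 B i (n + 1) where
  toFun u := ⟨u.1 ⟨[], n.succ_pos⟩, u.1, u.2, fun _ ↦ rfl⟩
  invFun s := ⟨s.2.1, s.2.2.1⟩
  left_inv _ := rfl
  right_inv := by
    rintro ⟨i, u, hu, hi⟩
    obtain rfl := hi n.succ_pos
    rfl

theorem card_block2_succ (B : Finset (Fin 2 × Fin 2 × Fin 2)) (n : ℕ) :
    Nat.card (Block2 B (n + 1)) = ∑ i, treeCount (childPairs B) n i := by
  simp only [Nat.card_congr (block2EquivSigma B n), Nat.card_sigma, card_blockRoot2_succ]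

theorem card_block2_succ_le (B : Finset (Fin 2 × Fin 2 × Fin 2)) (n : ℕ) :
    Nat.card (Block2 B (n + 1)) ≤ 2 ^ 2 ^ (n + 1) := by
  have h := card_mul_sum_treeCount_le (R := childPairs B) n
  rw [Fintype.card_fin, ← card_block2_succ, ← pow_mul, ← pow_succ'] at h
  lia

end Blocks

/-- For every basic set `B` over two symbols on binary trees, the entropy limit
`lim_n ln(ln c_n)/n` exists and equals `0` or `ln 2`. -/
theorem binary_markov_entropy_dichotomy (B : Finset (Fin 2 × Fin 2 × Fin 2)) :
    ∃ h : ℝ,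
      Tendsto (fun n : ℕ => Real.log (Real.log (Nat.card (Block2 B n))) / n)
        atTop (nhds h) ∧ (h = 0 ∨ h = Real.log 2) := by
  rcases treeCount_dichotomy (childPairs B) with ⟨N, i, lower⟩ | upper
  · refine ⟨log 2, tendsto_log_log_div_of_pow_pow_le (N := N + 1) (fun n ↦ ?_) ?_, .inr rfl⟩
    · rw [← add_assoc, card_block2_succ]
      exact (lower n).trans (single_le_sum_of_canonicallyOrdered (mem_univ i))
    · filter_upwards [eventually_ge_atTop 1] with n hn
      obtain ⟨k, rfl⟩ := Nat.exists_eq_add_of_le' hn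
      exact card_block2_succ_le B k
  · refine ⟨0, tendsto_log_log_div_of_le_pow (b := 4) ?_, .inl rfl⟩
    filter_upwards [eventually_ge_atTop 1] with n hn
    obtain ⟨k, rfl⟩ := Nat.exists_eq_add_of_le' hn
    calc Nat.card (Block2 B (k + 1)) = ∑ i, treeCount (childPairs B) k i := card_block2_succ B k
      _ ≤ ∑ _i : Fin 2, 2 ^ (k + 1) := sum_le_sum fun i _ ↦ upper k i
      _ = 2 * 2 ^ (k + 1) := by simp
      _ ≤ 2 ^ (k + 1) * 2 ^ (k + 1) := by gcongr; exact Nat.le_self_pow k.succ_ne_zero 2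
      _ = 4 ^ (k + 1) := (mul_pow 2 2 _).symm
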